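/- Let 𝒫x and 𝒫y be partitions of Ω. The following are equivalent: (i) for all maximal coherent sets of gambles M, M' on Ω, ε_y(M) = ε_y(M') implies ε_x(M) = ε_x(M'); (ii) for every maximal coherent set M, At(ε_y(M)) ⊆ At(ε_x(M)). -/

import Mathlib

open Set

universe u

/-- The set of gambles on `Ω`: bounded real-valued functions. -/
def Gmb (Ω : Type u) : Set (Ω → ℝ) := {f | ∃ B : ℝ, ∀ ω, |f ω| ≤ B}

/-- `L⁺(Ω)`: non-negative, non-vanishing gambles. -/
def GmbPos (Ω : Type u) : Set (Ω → ℝ) :=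
  {f | f ∈ Gmb Ω ∧ (∀ ω, 0 ≤ f ω) ∧ f ≠ 0}

/-- Coherent set of gambles. -/
def Coherent {Ω : Type u} (D : Set (Ω → ℝ)) : Prop :=
  D ⊆ Gmb Ω ∧ GmbPos Ω ⊆ D ∧ (0 : Ω → ℝ) ∉ D ∧
    (∀ f ∈ D, ∀ g ∈ D, f + g ∈ D) ∧
    (∀ f ∈ D, ∀ c : ℝ, 0 < c → c • f ∈ D)

/-- Maximal coherent set of gambles: no coherent set properly contains it. -/
def MaxCoh {Ω : Type u} (M : Set (Ω → ℝ)) : Prop :=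
  Coherent M ∧ ∀ D : Set (Ω → ℝ), Coherent D → M ⊆ D → D = M

/-- Membership in `Φ(Ω)`: coherent sets together with `L(Ω)`. -/
def PhiMem {Ω : Type u} (D : Set (Ω → ℝ)) : Prop :=
  Coherent D ∨ D = Gmb Ω

/-- The closure operator `C` on sets of gambles. -/
def Cl {Ω : Type u} (A : Set (Ω → ℝ)) : Set (Ω → ℝ) :=
  ⋂₀ {D | PhiMem D ∧ A ⊆ D}

/-- Order on partitions (as equivalence relations): `ple x y` iff `𝒫x ≤ 𝒫y`,
i.e. `y` refines `x`. -/
def ple {Ω : Type u} (x y : Setoid Ω) : Prop := ∀ a b : Ω, y.r a b → x.r a b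

/-- Join of two partitions: the relation is the conjunction. -/
def pjoin {Ω : Type u} (x y : Setoid Ω) : Setoid Ω :=
  ⟨fun a b => x.r a b ∧ y.r a b,
    ⟨fun a => ⟨x.iseqv.refl a, y.iseqv.refl a⟩,
     fun h => ⟨x.iseqv.symm h.1, y.iseqv.symm h.2⟩,
     fun h h' => ⟨x.iseqv.trans h.1 h'.1, y.iseqv.trans h.2 h'.2⟩⟩⟩

/-- Conditional independence of partitions: blocks are equivalence classes,
`B1 ∩ B ≠ ∅` and `B2 ∩ B ≠ ∅` imply `B1 ∩ B2 ∩ B ≠ ∅`. -/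
def CondIndep {Ω : Type u} (p1 p2 p : Setoid Ω) : Prop :=
  ∀ a b c : Ω, (∃ u, p1.r a u ∧ p.r c u) → (∃ v, p2.r b v ∧ p.r c v) →
    ∃ w, p1.r a w ∧ p2.r b w ∧ p.r c w

/-- Saturation operator of a partition. -/
def sat {Ω : Type u} (x : Setoid Ω) (S : Set Ω) : Set Ω :=
  {ω | ∃ ω' ∈ S, x.r ω ω'}

/-- `L_x`: the `x`-measurable gambles. -/
def Meas {Ω : Type u} (x : Setoid Ω) : Set (Ω → ℝ) :=
  {f | f ∈ Gmb Ω ∧ ∀ a b : Ω, x.r a b → f a = f b}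

/-- Extraction operator `ε_x`. -/
def eps {Ω : Type u} (x : Setoid Ω) (D : Set (Ω → ℝ)) : Set (Ω → ℝ) :=
  Cl (D ∩ Meas x)

/-- `At(D)`: maximal coherent sets dominating `D`. -/
def Atoms {Ω : Type u} (D : Set (Ω → ℝ)) : Set (Set (Ω → ℝ)) :=
  {M | MaxCoh M ∧ D ⊆ M}

/-- `D_S`: the coherent set of gambles associated to a set `S ⊆ Ω`. -/
def DS {Ω : Type u} (S : Set Ω) : Set (Ω → ℝ) :=
  {f | f ∈ Gmb Ω ∧ 0 < sInf (f '' S)} ∪ GmbPos Ω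

/-- `posi(K)`: positive linear hull. -/
def posi {Ω : Type u} (K : Set (Ω → ℝ)) : Set (Ω → ℝ) :=
  {g | ∃ r : ℕ, 1 ≤ r ∧ ∃ (lam : Fin r → ℝ) (f : Fin r → (Ω → ℝ)),
    (∀ j, 0 < lam j) ∧ (∀ j, f j ∈ K) ∧ g = ∑ j, lam j • f j}

theorem neg_mem_of_max {Ω : Type u} {M : Set (Ω → ℝ)} (hM : MaxCoh M) {f : Ω → ℝ}
    (hf : f ∈ Gmb Ω) (hf0 : f ≠ 0) (hfM : f ∉ M) : -f ∈ M := by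
  obtain ⟨⟨hG, hP, h0, hadd, hsm⟩, hmax⟩ := hM
  have key : ({h : Ω → ℝ | ∃ c : ℝ, 0 ≤ c ∧ (h + c • f ∈ M ∨ (0 < c ∧ h + c • f = 0))}) = M := by
    apply hmax
    · refine ⟨?_, ?_, ?_, ?_, ?_⟩
      · rintro h ⟨c, hc, hh⟩
        obtain ⟨B, hB⟩ := hf
        have : h + c • f ∈ Gmb Ω := by
          rcases hh with hh | ⟨_, hh⟩
          · exact hG hh
          · rw [hh]; exact ⟨0, by simp⟩
        obtain ⟨B', hB'⟩ := this
        refine ⟨B' + c * B, fun ω => ?_⟩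
        have h1 := hB' ω
        have h2 := mul_le_mul_of_nonneg_left (hB ω) hc
        have h3 : |c * f ω| = c * |f ω| := by rw [abs_mul, abs_of_nonneg hc]
        have h4 := abs_sub (h ω + c * f ω) (c * f ω)
        simp only [Pi.add_apply, Pi.smul_apply, smul_eq_mul] at h1
        rw [add_sub_cancel_right] at h4
        linarith
      · intro h hh
        exact ⟨0, le_rfl, Or.inl (by simpa using hP hh)⟩
      · rintro ⟨c, hc, hh | ⟨hc', hh⟩⟩
        · rcases hc.eq_or_lt with rfl | hc'
          · exact h0 (by simpa using hh)
          · apply hfM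
            have := hsm _ hh c⁻¹ (inv_pos.2 hc')
            rwa [zero_add, smul_smul, inv_mul_cancel₀ hc'.ne', one_smul] at this
        · rw [zero_add, smul_eq_zero] at hh
          exact hh.elim hc'.ne' hf0
      · rintro g ⟨c, hc, hg⟩ h ⟨d, hd, hh⟩
        have e : g + h + (c + d) • f = (g + c • f) + (h + d • f) := by
          rw [add_smul]; abel
        refine ⟨c + d, by positivity, ?_⟩
        rw [e]
        rcases hg with hg | ⟨hc', hg⟩
        · rcases hh with hh | ⟨hd', hh⟩
          · exact Or.inl (hadd _ hg _ hh)
          · rw [hh, add_zero]; exact Or.inl hg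
        · rw [hg, zero_add]
          rcases hh with hh | ⟨hd', hh⟩
          · exact Or.inl hh
          · exact Or.inr ⟨by positivity, hh⟩
      · rintro h ⟨c, hc, hh⟩ a ha
        have e : a • h + (a * c) • f = a • (h + c • f) := by
          rw [smul_add, smul_smul]
        refine ⟨a * c, by positivity, ?_⟩
        rw [e]
        rcases hh with hh | ⟨hc', hh⟩
        · exact Or.inl (hsm _ hh _ ha)
        · exact Or.inr ⟨by positivity, by rw [hh, smul_zero]⟩
    · intro h hh
      exact ⟨0, le_rfl, Or.inl (by simpa using hh)⟩
  rw [← key]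
  exact ⟨1, zero_le_one, Or.inr ⟨one_pos, by simp⟩⟩

theorem eps_sub_self {Ω : Type u} (x : Setoid Ω) {M : Set (Ω → ℝ)} (hM : MaxCoh M) :
    eps x M ⊆ M :=
  sInter_subset_of_mem ⟨Or.inl hM.1, inter_subset_left⟩

theorem eps_eq_of_sub {Ω : Type u} (x : Setoid Ω) {M M' : Set (Ω → ℝ)} (hM : MaxCoh M)
    (hM' : MaxCoh M') (h : eps x M ⊆ M') : eps x M = eps x M' := by
  have h1 : M ∩ Meas x ⊆ M' := fun f hf => h (mem_sInter.2 fun D hD => hD.2 hf)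
  have h2 : M' ∩ Meas x ⊆ M := by
    rintro f ⟨hf, hx⟩
    by_contra hn
    have hf0 : f ≠ 0 := fun e => hM'.1.2.2.1 (e ▸ hf)
    have h3 := neg_mem_of_max hM hx.1 hf0 hn
    have h4 : -f ∈ M' := h1 ⟨h3, hM.1.1 h3, fun a b hab => by simp [hx.2 a b hab]⟩
    apply hM'.1.2.2.1
    have := hM'.1.2.2.2.1 _ hf _ h4
    rwa [add_neg_cancel] at this
  have : M ∩ Meas x = M' ∩ Meas x :=
    Subset.antisymm (fun f hf => ⟨h1 hf, hf.2⟩) (fun f hf => ⟨h2 hf, hf.2⟩)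
  unfold eps
  rw [this]

theorem stmt4 {Ω : Type u} [Nonempty Ω] (x y : Setoid Ω) :
    (∀ M M' : Set (Ω → ℝ), MaxCoh M → MaxCoh M' → eps y M = eps y M' → eps x M = eps x M') ↔
      ∀ M : Set (Ω → ℝ), MaxCoh M → Atoms (eps y M) ⊆ Atoms (eps x M) := by
  constructor
  · intro h M hM M' hM'
    refine ⟨hM'.1, ?_⟩
    rw [h M M' hM hM'.1 (eps_eq_of_sub y hM hM'.1 hM'.2)]
    exact eps_sub_self x hM'.1
  · intro h M M' hM hM' e
    refine eps_eq_of_sub x hM hM' (h M hM ⟨hM', ?_⟩).2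
    rw [e]
    exact eps_sub_self y hM'
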